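/- Let n ≥ 2 and let G_0, G_1, …, G_T be an actively dynamic sequence with G_0 = P_n the path graph on n vertices, T ≥ 1, such that the endpoints 0 and n−1 are reachable in G_T with dist_{G_T}(0, n−1) ≤ ⌈log₂ n⌉. Then there exists a round i < T with |E(G_{i+1}) \ E(G_i)| ≥ (n − 1 − ⌈log₂ n⌉)/T. In particular, if T ≤ C·⌈log₂ n⌉ for a constant C, some round activates Ω(n/log n) edges. -/

import Mathlib

/-- A sequence of simple graphs on a common vertex set is actively dynamic (up to time `T`)
if, for every round `i < T`, every edge of `G (i+1)` that is not an edge of `G i` joins two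
vertices that have a common neighbor in `G i`. -/
def ActivelyDynamic {V : Type*} (Gs : ℕ → SimpleGraph V) (T : ℕ) : Prop :=
  ∀ i < T, ∀ u v : V, (Gs (i + 1)).Adj u v → ¬ (Gs i).Adj u v →
    ∃ w : V, (Gs i).Adj u w ∧ (Gs i).Adj w v

/-- The path graph `P_n` on vertices `{0, …, n-1}` with edges `{j, j+1}`. -/
def pathGraph' (n : ℕ) : SimpleGraph (Fin n) :=
  SimpleGraph.fromRel (fun u v => u.val + 1 = v.val)

theorem walk_back {V : Type*} (G H : SimpleGraph V)
    (h : ∀ u v : V, H.Adj u v → ¬ G.Adj u v → ∃ w : V, G.Adj u w ∧ G.Adj w v)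
    {u v : V} (p : H.Walk u v) :
    ∃ q : G.Walk u v, ∃ l : List (Sym2 V), l.Sublist p.edges ∧ (∀ e ∈ l, e ∉ G.edgeSet) ∧
      q.length ≤ p.length + l.length := by
  induction p with
  | nil => exact ⟨SimpleGraph.Walk.nil, [], by simp, by simp, by simp⟩
  | @cons a b c hab p ih =>
    obtain ⟨q, l, hl, hG, hq⟩ := ih
    by_cases hadj : G.Adj a b
    · refine ⟨SimpleGraph.Walk.cons hadj q, l, ?_, hG, ?_⟩
      · rw [SimpleGraph.Walk.edges_cons]
        exact hl.cons _
      · simp only [SimpleGraph.Walk.length_cons]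
        omega
    · obtain ⟨w, h1, h2⟩ := h a b hab hadj
      refine ⟨SimpleGraph.Walk.cons h1 (SimpleGraph.Walk.cons h2 q), s(a, b) :: l, ?_, ?_, ?_⟩
      · rw [SimpleGraph.Walk.edges_cons]
        exact hl.cons_cons _
      · intro e he
        rcases List.mem_cons.1 he with rfl | he
        · simpa using hadj
        · exact hG e he
      · simp only [SimpleGraph.Walk.length_cons, List.length_cons]
        omega

theorem walk_back_ncard {V : Type*} [Finite V] (G H : SimpleGraph V)
    (h : ∀ u v : V, H.Adj u v → ¬ G.Adj u v → ∃ w : V, G.Adj u w ∧ G.Adj w v)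
    {u v : V} (p : H.Walk u v) :
    ∃ q : G.Walk u v, q.length ≤ p.length + (H.edgeSet \ G.edgeSet).ncard := by
  classical
  obtain ⟨q, l, hl, hG, hq⟩ := walk_back G H h p.bypass
  refine ⟨q, ?_⟩
  have hnd : l.Nodup := (p.bypass_isPath.isTrail.edges_nodup).sublist hl
  have h1 : l.length ≤ (H.edgeSet \ G.edgeSet).ncard := by
    rw [← List.toFinset_card_of_nodup hnd, ← Set.ncard_coe_finset]
    apply Set.ncard_le_ncard _ (Set.toFinite _)
    intro e he
    have he' : e ∈ l := by simpa using he
    exact ⟨SimpleGraph.Walk.edges_subset_edgeSet _ (hl.subset he'), hG e he'⟩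
  have h2 := p.length_bypass_le_length
  omega

theorem path_walk_length {n : ℕ} {u v : Fin n} (p : (pathGraph' n).Walk u v) :
    v.val ≤ u.val + p.length := by
  induction p with
  | nil => simp
  | cons hab p ih =>
    rw [SimpleGraph.Walk.length_cons]
    simp only [pathGraph', SimpleGraph.fromRel_adj] at hab
    omega

theorem dyn_walk_length {n : ℕ} (Gs : ℕ → SimpleGraph (Fin n)) (h0 : Gs 0 = pathGraph' n)
    (T : ℕ) (hdyn : ActivelyDynamic Gs T) {u v : Fin n} (p : (Gs T).Walk u v) :
    v.val ≤ u.val + p.length +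
      ∑ i ∈ Finset.range T, ((Gs (i + 1)).edgeSet \ (Gs i).edgeSet).ncard := by
  induction T with
  | zero =>
    have key : ∀ (G : SimpleGraph (Fin n)), G = pathGraph' n → ∀ p : G.Walk u v,
        v.val ≤ u.val + p.length := by
      rintro G rfl p
      exact path_walk_length p
    simpa using key _ h0 p
  | succ T ih =>
    obtain ⟨q, hq⟩ := walk_back_ncard (Gs T) (Gs (T + 1)) (hdyn T (Nat.lt_succ_self T)) p
    have := ih (fun i hi => hdyn i (Nat.lt_succ_of_lt hi)) q
    rw [Finset.sum_range_succ]
    omega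

/-- Lower bound on edge activations per round: if an actively dynamic sequence starting
from the path `P_n` brings the endpoints within distance `⌈log₂ n⌉` in `T ≥ 1` rounds,
then some round activates at least `(n - 1 - ⌈log₂ n⌉)/T` edges. -/
theorem path_activations_per_round_lower_bound (n : ℕ) (hn : 2 ≤ n)
    (Gs : ℕ → SimpleGraph (Fin n)) (T : ℕ) (hT : 1 ≤ T)
    (hdyn : ActivelyDynamic Gs T) (h0 : Gs 0 = pathGraph' n)
    (hreach : (Gs T).Reachable ⟨0, by omega⟩ ⟨n - 1, by omega⟩)
    (hdist : (Gs T).dist ⟨0, by omega⟩ ⟨n - 1, by omega⟩ ≤ Nat.clog 2 n) :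
    ∃ i < T, ((n : ℚ) - 1 - (Nat.clog 2 n : ℚ)) / (T : ℚ)
      ≤ (((Gs (i + 1)).edgeSet \ (Gs i).edgeSet).ncard : ℚ) := by
  obtain ⟨p, hp⟩ := hreach.exists_walk_length_eq_dist
  have key := dyn_walk_length Gs h0 T hdyn p
  have hle : n ≤ 1 + Nat.clog 2 n +
      ∑ i ∈ Finset.range T, ((Gs (i + 1)).edgeSet \ (Gs i).edgeSet).ncard := by
    simp only at key
    omega
  by_contra! hcon
  have hT' : (0 : ℚ) < T := by exact_mod_cast hT
  have hsum : ∑ i ∈ Finset.range T, (((Gs (i + 1)).edgeSet \ (Gs i).edgeSet).ncard : ℚ) <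
      ∑ i ∈ Finset.range T, ((n : ℚ) - 1 - (Nat.clog 2 n : ℚ)) / (T : ℚ) :=
    Finset.sum_lt_sum_of_nonempty (Finset.nonempty_range_iff.2 (by omega))
      (fun i hi => hcon i (Finset.mem_range.1 hi))
  rw [Finset.sum_const, Finset.card_range, nsmul_eq_mul, mul_div_cancel₀ _ hT'.ne'] at hsum
  have hle' : (n : ℚ) ≤ 1 + Nat.clog 2 n +
      ∑ i ∈ Finset.range T, (((Gs (i + 1)).edgeSet \ (Gs i).edgeSet).ncard : ℚ) := by
    exact_mod_cast hle
  linarith
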